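/- Let A be a maximal monotone operator on ℝ^m whose domain D(A) has nonempty interior. Then there exist a ∈ ℝ^m, c₁ > 0 and c₂ ≥ 0 with the following property: whenever F : [0,∞) → ℝ^m is continuous, g : [0,∞) → ℝ^m is locally integrable and g(u) ∈ A(F(u)) for almost every u ≥ 0, one has for all 0 ≤ s ≤ t: ∫_s^t ⟨F(u) − a, g(u)⟩ du ≥ c₁ ∫_s^t ‖g(u)‖ du − c₂ ∫_s^t ‖F(u) − a‖ du − c₁c₂(t − s). -/

import Mathlib

/-!
If `w ∈ A z`, monotonicity gives `⟪z - a, y⟫ ≤ ⟪x - a, y⟫ + ‖w‖ * ‖x - z‖` for every `y ∈ A x`.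
For `a` interior to the domain, `z - a` may be any small vector. Fixing `b ∈ A a`, the quantity
`N = ⟪x - a, y⟫ + (‖b‖ + 1) * (‖x - a‖ + 1)` is at least `‖x - a‖ + 1`, so the functionals
`N⁻¹ • ⟪·, y⟫` are pointwise bounded over the graph of `A`. The uniform boundedness principle then
gives `‖y‖ ≤ C * N`, and integrating this along `x = F u`, `y = g u` is the estimate.
-/

open Set MeasureTheory
open scoped RealInnerProductSpace

/-- A multivalued operator on `ℝ^m` is monotone if
`⟨x₁ - x₂, y₁ - y₂⟩ ≥ 0` for all pairs in its graph. -/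
def IsMonotoneOp {m : ℕ} (A : EuclideanSpace ℝ (Fin m) → Set (EuclideanSpace ℝ (Fin m))) : Prop :=
  ∀ x₁ y₁ x₂ y₂, y₁ ∈ A x₁ → y₂ ∈ A x₂ → (0:ℝ) ≤ ⟪x₁ - x₂, y₁ - y₂⟫

/-- A multivalued operator is maximal monotone if it is monotone and its graph is maximal
among graphs of monotone operators. -/
def IsMaximalMonotone {m : ℕ}
    (A : EuclideanSpace ℝ (Fin m) → Set (EuclideanSpace ℝ (Fin m))) : Prop :=
  IsMonotoneOp A ∧
    ∀ x y, (∀ x₂ y₂, y₂ ∈ A x₂ → (0:ℝ) ≤ ⟪x - x₂, y - y₂⟫) → y ∈ A x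

open Filter Topology

theorem exists_abs_apply_le_mul_of_eventually_apply_le_mul {E ι : Type*} [AddCommGroup E]
    [Module ℝ E] [TopologicalSpace E] [ContinuousSMul ℝ E] {f : ι → E →ₗ[ℝ] ℝ} {N : ι → ℝ}
    (hN : ∀ i, 0 ≤ N i) (h : ∀ᶠ v in 𝓝 (0 : E), ∃ C, ∀ i, f i v ≤ C * N i) (v : E) :
    ∃ C, ∀ i, |f i v| ≤ C * N i := by
  have upper_bound (v : E) : ∃ C, ∀ i, f i v ≤ C * N i := by
    have h_line : Tendsto (fun ε : ℝ => ε • v) (𝓝[>] 0) (𝓝 0) :=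
      (Continuous.tendsto' (by fun_prop) 0 0 (zero_smul ℝ v)).mono_left nhdsWithin_le_nhds
    obtain ⟨ε, ⟨C, hC⟩, hε : 0 < ε⟩ := ((h_line.eventually h).and self_mem_nhdsWithin).exists
    refine ⟨C / ε, fun i => ?_⟩
    have := hC i
    rw [map_smul, smul_eq_mul] at this
    rwa [div_mul_eq_mul_div, le_div_iff₀' hε]
  obtain ⟨C, hC⟩ := upper_bound v
  obtain ⟨C', hC'⟩ := upper_bound (-v)
  refine ⟨max C C', fun i => abs_le'.2 ⟨?_, ?_⟩⟩
  · exact (hC i).trans (mul_le_mul_of_nonneg_right (le_max_left C C') (hN i))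
  · rw [← map_neg]
    exact (hC' i).trans (mul_le_mul_of_nonneg_right (le_max_right C C') (hN i))

theorem norm_inv_smul_le_iff {E : Type*} [SeminormedAddCommGroup E] [NormedSpace ℝ E] {r C : ℝ}
    (hr : 0 < r) {x : E} : ‖r⁻¹ • x‖ ≤ C ↔ ‖x‖ ≤ C * r := by
  rw [norm_smul_of_nonneg (inv_nonneg.2 hr.le), inv_mul_le_iff₀' hr]

theorem exists_norm_le_mul_of_forall_exists_abs_apply_le_mul {E ι : Type*}
    [SeminormedAddCommGroup E] [NormedSpace ℝ E] [CompleteSpace E] {f : ι → StrongDual ℝ E}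
    {N : ι → ℝ} (hN : ∀ i, 0 < N i) (h : ∀ v, ∃ C, ∀ i, |f i v| ≤ C * N i) :
    ∃ C, ∀ i, ‖f i‖ ≤ C * N i := by
  have pointwise_bound (v : E) : ∃ C, ∀ i, ‖((N i)⁻¹ • f i) v‖ ≤ C := by
    obtain ⟨C, hC⟩ := h v
    exact ⟨C, fun i => (norm_inv_smul_le_iff (hN i)).2 (hC i)⟩
  obtain ⟨C, hC⟩ := banach_steinhaus pointwise_bound
  exact ⟨C, fun i => (norm_inv_smul_le_iff (hN i)).1 (hC i)⟩

variable {H : Type*} [NormedAddCommGroup H] [InnerProductSpace ℝ H]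

/-- Monotonicity of a multivalued operator on an arbitrary real inner product space; on
`EuclideanSpace ℝ (Fin m)` it unfolds to `IsMonotoneOp`. -/
def IsMonotoneOperator (A : H → Set H) : Prop :=
  ∀ ⦃x₁ y₁ x₂ y₂⦄, y₁ ∈ A x₁ → y₂ ∈ A x₂ → (0 : ℝ) ≤ ⟪x₁ - x₂, y₁ - y₂⟫

namespace IsMonotoneOperator

variable {A : H → Set H} {a b v w x y z : H}

theorem inner_sub_le (hA : IsMonotoneOperator A) (hy : y ∈ A x) (hw : w ∈ A z) (a : H) :
    ⟪z - a, y⟫ ≤ ⟪x - a, y⟫ + ‖w‖ * ‖x - z‖ := by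
  have h_mono : (0 : ℝ) ≤ ⟪x - z, y - w⟫ := hA hy hw
  have h_split : ⟪x - z, y - w⟫ = ⟪x - a, y⟫ - ⟪z - a, y⟫ - ⟪x - z, w⟫ := by
    rw [inner_sub_right, ← inner_sub_left, sub_sub_sub_cancel_right]
  have h_cauchy : -⟪x - z, w⟫ ≤ ‖w‖ * ‖x - z‖ := by
    rw [← inner_neg_left, ← norm_neg (x - z), mul_comm]
    exact real_inner_le_norm _ _
  linarith

theorem norm_sub_add_one_le (hA : IsMonotoneOperator A) (hy : y ∈ A x) (hb : b ∈ A a) :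
    ‖x - a‖ + 1 ≤ ⟪x - a, y⟫ + (‖b‖ + 1) * (‖x - a‖ + 1) := by
  have h_inner : 0 ≤ ⟪x - a, y⟫ + ‖b‖ * ‖x - a‖ := by
    simpa only [sub_self, inner_zero_left] using hA.inner_sub_le hy hb a
  linarith [norm_nonneg b]

theorem inner_le_mul_inner_add (hA : IsMonotoneOperator A) (hy : y ∈ A x) (hb : b ∈ A a)
    (hw : w ∈ A (a + v)) :
    ⟪v, y⟫ ≤ (1 + ‖w‖ * (1 + ‖v‖)) * (⟪x - a, y⟫ + (‖b‖ + 1) * (‖x - a‖ + 1)) := by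
  set N : ℝ := ⟪x - a, y⟫ + (‖b‖ + 1) * (‖x - a‖ + 1)
  have inner_le_N : ⟪x - a, y⟫ ≤ N := le_add_of_nonneg_right (by positivity)
  have dist_le_N : ‖x - (a + v)‖ ≤ (1 + ‖v‖) * N := by
    calc ‖x - (a + v)‖ ≤ ‖x - a‖ + ‖v‖ := by
          rw [← sub_sub]
          exact norm_sub_le _ _
      _ ≤ (1 + ‖v‖) * (‖x - a‖ + 1) := by
          linarith [mul_nonneg (norm_nonneg v) (norm_nonneg (x - a))]
      _ ≤ (1 + ‖v‖) * N := by
          gcongr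
          exact hA.norm_sub_add_one_le hy hb
  calc ⟪v, y⟫ = ⟪a + v - a, y⟫ := by rw [add_sub_cancel_left]
    _ ≤ ⟪x - a, y⟫ + ‖w‖ * ‖x - (a + v)‖ := hA.inner_sub_le hy hw a
    _ ≤ N + ‖w‖ * ((1 + ‖v‖) * N) := by gcongr
    _ = (1 + ‖w‖ * (1 + ‖v‖)) * N := by ring

theorem exists_norm_le_mul_inner_add [CompleteSpace H] (hA : IsMonotoneOperator A)
    (ha : a ∈ interior {x | (A x).Nonempty}) :
    ∃ C K : ℝ, 1 ≤ C ∧ 0 ≤ K ∧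
      ∀ x y, y ∈ A x → ‖y‖ ≤ C * (⟪x - a, y⟫ + K * (‖x - a‖ + 1)) := by
  obtain ⟨b, hb⟩ : ∃ b, b ∈ A a := interior_subset (s := {x | (A x).Nonempty}) ha
  let N (p : {p : H × H // p.2 ∈ A p.1}) : ℝ :=
    ⟪p.1.1 - a, p.1.2⟫ + (‖b‖ + 1) * (‖p.1.1 - a‖ + 1)
  have N_pos (p) : 0 < N p :=
    lt_of_lt_of_le (by positivity) (hA.norm_sub_add_one_le p.2 hb)
  have h_nonempty : ∀ᶠ v in 𝓝 (0 : H), (A (a + v)).Nonempty :=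
    (Continuous.tendsto' (by fun_prop) 0 a (add_zero a)).eventually
      (mem_interior_iff_mem_nhds.1 ha)
  have upper_bound : ∀ᶠ v in 𝓝 (0 : H), ∃ C, ∀ p, innerₗ H p.1.2 v ≤ C * N p := by
    filter_upwards [h_nonempty] with v ⟨w, hw⟩
    refine ⟨1 + ‖w‖ * (1 + ‖v‖), fun p => ?_⟩
    rw [innerₗ_apply_apply, real_inner_comm]
    exact hA.inner_le_mul_inner_add p.2 hb hw
  obtain ⟨C, hC⟩ := exists_norm_le_mul_of_forall_exists_abs_apply_le_mul
    (f := fun p => innerSL ℝ p.1.2) N_pos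
    (exists_abs_apply_le_mul_of_eventually_apply_le_mul (fun p => (N_pos p).le) upper_bound)
  refine ⟨max C 1, ‖b‖ + 1, le_max_right C 1, by positivity, fun x y hy => ?_⟩
  calc ‖y‖ = ‖innerSL ℝ y‖ := (innerSL_apply_norm ℝ y).symm
    _ ≤ C * N ⟨(x, y), hy⟩ := hC ⟨(x, y), hy⟩
    _ ≤ max C 1 * N ⟨(x, y), hy⟩ := mul_le_mul_of_nonneg_right (le_max_left C 1) (N_pos _).le

theorem exists_le_inner [CompleteSpace H] (hA : IsMonotoneOperator A)
    (ha : a ∈ interior {x | (A x).Nonempty}) :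
    ∃ c₁ c₂ : ℝ, 0 < c₁ ∧ 0 ≤ c₂ ∧
      ∀ x y, y ∈ A x → c₁ * ‖y‖ - c₂ * ‖x - a‖ - c₁ * c₂ ≤ ⟪x - a, y⟫ := by
  obtain ⟨C, K, hC, hK, h_norm⟩ := hA.exists_norm_le_mul_inner_add ha
  have hC_pos : 0 < C := zero_lt_one.trans_le hC
  refine ⟨C⁻¹, C * K, inv_pos.2 hC_pos, by positivity, fun x y hy => ?_⟩
  have h_inv : C⁻¹ * ‖y‖ ≤ ⟪x - a, y⟫ + K * (‖x - a‖ + 1) :=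
    (inv_mul_le_iff₀ hC_pos).2 (h_norm x y hy)
  have h_coeff : K * ‖x - a‖ ≤ C * K * ‖x - a‖ := by
    gcongr
    exact le_mul_of_one_le_left hK hC
  have h_const : C⁻¹ * (C * K) = K := inv_mul_cancel_left₀ hC_pos.ne' K
  linarith

end IsMonotoneOperator

theorem intervalIntegrable_inner_of_continuousOn {μ : Measure ℝ} {F g : ℝ → H} {s t : ℝ}
    (hF : ContinuousOn F (uIcc s t)) (hg : IntervalIntegrable g μ s t) :
    IntervalIntegrable (fun u => ⟪F u, g u⟫) μ s t := by
  obtain ⟨C, hC⟩ := isCompact_uIcc.exists_bound_of_continuousOn hF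
  rw [intervalIntegrable_iff] at hg ⊢
  refine (innerSL ℝ).integrable_of_bilin_of_bdd_left C
    ((hF.mono uIoc_subset_uIcc).aestronglyMeasurable measurableSet_uIoc) ?_ hg
  filter_upwards [ae_restrict_mem measurableSet_uIoc] with u hu
  exact hC u (uIoc_subset_uIcc hu)

theorem le_integral_inner_of_ae_le {F g : ℝ → H} {s t k₁ k₂ k₃ : ℝ} (hst : s ≤ t)
    (hF : ContinuousOn F (uIcc s t)) (hg : IntervalIntegrable g volume s t)
    (h : ∀ᵐ u ∂volume.restrict (Icc s t), k₁ * ‖g u‖ - k₂ * ‖F u‖ - k₃ ≤ ⟪F u, g u⟫) :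
    k₁ * (∫ u in s..t, ‖g u‖) - k₂ * (∫ u in s..t, ‖F u‖) - k₃ * (t - s) ≤
      ∫ u in s..t, ⟪F u, g u⟫ := by
  have hg' := hg.norm.const_mul k₁
  have hF' := (hF.norm.intervalIntegrable (μ := volume)).const_mul k₂
  have hgF := hg'.sub hF'
  have hk : IntervalIntegrable (fun _ => k₃) volume s t := intervalIntegrable_const
  calc k₁ * (∫ u in s..t, ‖g u‖) - k₂ * (∫ u in s..t, ‖F u‖) - k₃ * (t - s)
      = ∫ u in s..t, (k₁ * ‖g u‖ - k₂ * ‖F u‖ - k₃) := by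
        rw [intervalIntegral.integral_sub hgF hk, intervalIntegral.integral_sub hg' hF',
          intervalIntegral.integral_const_mul, intervalIntegral.integral_const_mul,
          intervalIntegral.integral_const, smul_eq_mul, mul_comm (t - s)]
    _ ≤ ∫ u in s..t, ⟪F u, g u⟫ :=
        intervalIntegral.integral_mono_ae_restrict hst (hgF.sub hk)
          (intervalIntegrable_inner_of_continuousOn hF hg) h

theorem cepa_estimate_general [CompleteSpace H] {A : H → Set H} (hA : IsMonotoneOperator A)
    {a : H} (ha : a ∈ interior {x | (A x).Nonempty}) :
    ∃ c₁ c₂ : ℝ, 0 < c₁ ∧ 0 ≤ c₂ ∧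
      ∀ F g : ℝ → H,
        ContinuousOn F (Ici 0) →
        LocallyIntegrableOn g (Ici 0) →
        (∀ᵐ u ∂(volume.restrict (Ici (0 : ℝ))), g u ∈ A (F u)) →
        ∀ s t : ℝ, 0 ≤ s → s ≤ t →
          c₁ * (∫ u in s..t, ‖g u‖) - c₂ * (∫ u in s..t, ‖F u - a‖) - c₁ * c₂ * (t - s) ≤
            ∫ u in s..t, ⟪F u - a, g u⟫ := by
  obtain ⟨c₁, c₂, hc₁, hc₂, h_le⟩ := hA.exists_le_inner ha
  refine ⟨c₁, c₂, hc₁, hc₂, fun F g hF hg hgA s t hs hst => ?_⟩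
  have h_sub : uIcc s t ⊆ Ici 0 := by
    rw [uIcc_of_le hst]
    exact Icc_subset_Ici_self.trans (Ici_subset_Ici.2 hs)
  refine le_integral_inner_of_ae_le hst ((hF.mono h_sub).sub continuousOn_const)
    (hg.integrableOn_compact_subset h_sub isCompact_uIcc).intervalIntegrable ?_
  rw [← uIcc_of_le hst]
  filter_upwards [ae_restrict_of_ae_restrict_of_subset h_sub hgA] with u hu
  exact h_le _ _ hu

/-- Cépa's estimate (absolutely continuous case): for a maximal monotone operator whose domain
has nonempty interior, there exist `a`, `c₁ > 0`, `c₂ ≥ 0` such that whenever `F` is continuous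
on `[0,∞)`, `g` is locally integrable on `[0,∞)` and `g(u) ∈ A(F(u))` a.e., one has
`∫ₛᵗ ⟨F(u) - a, g(u)⟩ du ≥ c₁ ∫ₛᵗ ‖g(u)‖ du - c₂ ∫ₛᵗ ‖F(u) - a‖ du - c₁c₂ (t - s)`. -/
theorem cepa_estimate {m : ℕ}
    (A : EuclideanSpace ℝ (Fin m) → Set (EuclideanSpace ℝ (Fin m)))
    (hA : IsMaximalMonotone A)
    (hD : (interior {x | (A x).Nonempty}).Nonempty) :
    ∃ (a : EuclideanSpace ℝ (Fin m)) (c₁ c₂ : ℝ), 0 < c₁ ∧ 0 ≤ c₂ ∧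
      ∀ F g : ℝ → EuclideanSpace ℝ (Fin m),
        ContinuousOn F (Set.Ici 0) →
        LocallyIntegrableOn g (Set.Ici 0) →
        (∀ᵐ u ∂(volume.restrict (Set.Ici (0:ℝ))), g u ∈ A (F u)) →
        ∀ s t : ℝ, 0 ≤ s → s ≤ t →
          c₁ * (∫ u in s..t, ‖g u‖) - c₂ * (∫ u in s..t, ‖F u - a‖) - c₁ * c₂ * (t - s) ≤
            ∫ u in s..t, ⟪F u - a, g u⟫ := by
  obtain ⟨a, ha⟩ := hD
  exact ⟨a, cepa_estimate_general (fun _ _ _ _ => hA.1 _ _ _ _) ha⟩
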